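/- For a real number M ≥ 0 let T(M) be the set of integers k with |k| ≤ M such that the equation (x²−36)(y²−36)(z²−36) + 468·(xyz−4330)² = k has a solution in real numbers and, for every prime p, a solution in ℤ_p, but has no solution in integers x, y, z. Then there exist a constant c > 0 and M₀ such that for all M ≥ M₀ one has #T(M) ≥ c·√M / log M. -/

import Mathlib

/-- The integral model `𝒰_k` of the Markoff-type K3 surface
`(x²−36)(y²−36)(z²−36) + 468(xyz−4330)² = k` is everywhere locally solvable:
it has a real point and a `ℤ_p`-point for every prime `p`. -/
def MK3LocallySolvable (k : ℤ) : Prop :=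
  (∃ x y z : ℝ,
    (x ^ 2 - 36) * (y ^ 2 - 36) * (z ^ 2 - 36) + 468 * (x * y * z - 4330) ^ 2 = (k : ℝ)) ∧
  (∀ (p : ℕ) [Fact p.Prime], ∃ x y z : ℤ_[p],
    (x ^ 2 - 36) * (y ^ 2 - 36) * (z ^ 2 - 36) + 468 * (x * y * z - 4330) ^ 2 = (k : ℤ_[p]))


open Polynomial in
theorem step_aux (p : ℕ) [Fact p.Prime] (hp : 7 ≤ p) (D : (ZMod p)[X]) (hdeg : D.natDegree ≤ 4)
    (hsep : IsCoprime D (derivative D)) (hnc : ¬ IsUnit D) :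
    ∃ y : ZMod p, IsSquare (D.eval y) := by
  by_contra hno
  push Not at hno
  have hp2 : p ≠ 2 := by omega
  have hodd : p % 2 = 1 := (Nat.Prime.eq_two_or_odd (Fact.out : p.Prime)).resolve_left hp2
  set m := p / 2 with hm
  have hpm : p = 2 * m + 1 := by omega
  have hcard : Fintype.card (ZMod p) = p := ZMod.card p
  have h1 : ∀ y : ZMod p, (D ^ m + 1).eval y = 0 := by
    intro y
    have h0 : D.eval y ≠ 0 := by
      intro h; apply hno y; rw [h]; exact ⟨0, by simp⟩
    have := ZMod.pow_div_two_eq_neg_one_or_one p h0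
    have h2 := (ZMod.euler_criterion p h0).not.mp (hno y)
    simp only [eval_add, eval_pow, eval_one]
    rcases this with h | h
    · exact absurd h h2
    · rw [h]; ring
  set W : (ZMod p)[X] := X ^ p - X with hW
  have hWdeg : W.natDegree = p := by
    rw [hW]; exact FiniteField.X_pow_card_sub_X_natDegree_eq (ZMod p) (by omega)
  have hWprod : (∏ a : ZMod p, (X - C a)) = W := by
    have hr : W.roots = (Finset.univ : Finset (ZMod p)).val := by
      have := FiniteField.roots_X_pow_card_sub_X (ZMod p)
      rwa [hcard] at this
    have h3 := Polynomial.prod_multiset_X_sub_C_of_monic_of_roots_card_eq (p := W) (by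
      rw [hW]; exact monic_X_pow_sub (by rw [degree_X]; exact_mod_cast (by omega : 1 < p))) (by
      rw [hr, hWdeg]; simpa using hcard)
    rw [hr] at h3
    exact h3
  have hdvd : W ∣ D ^ m + 1 := by
    rw [← hWprod]
    apply Finset.prod_dvd_of_coprime
    · intro a _ b _ hab
      exact isCoprime_X_sub_C_of_isUnit_sub (sub_ne_zero.mpr hab).isUnit
    · intro a _
      exact dvd_iff_isRoot.mpr (h1 a)
  obtain ⟨g, hg⟩ := hdvd
  have hW0 : W ≠ 0 := by intro h; rw [h] at hWdeg; simp at hWdeg; omega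
  have hW' : derivative W = -1 := by
    rw [hW]; simp [derivative_X_pow]
  have key : ∀ A B : (ZMod p)[X], W * A = B → A.natDegree + p ≤ B.natDegree ∨ A = 0 := by
    intro A B h
    by_cases hA : A = 0
    · right; exact hA
    · left; rw [← h, natDegree_mul hW0 hA, hWdeg]; omega
  have hm2 : (2 * (m : (ZMod p)[X])) = -1 := by
    have : ((2 * m + 1 : ℕ) : (ZMod p)[X]) = 0 := by
      rw [← hpm]; exact CharP.cast_eq_zero _ p
    push_cast at this
    linear_combination this
  have hgdeg : g.natDegree ≤ p - 2 := by
    rcases key g _ hg.symm with h | h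
    · have : (D ^ m + 1).natDegree ≤ m * 4 := by
        refine (natDegree_add_le _ _).trans ?_
        simp only [natDegree_one, max_le_iff, Nat.zero_le, and_true]
        exact natDegree_pow_le.trans (Nat.mul_le_mul_left _ hdeg)
      omega
    · rw [h]; simp
  have hd := congrArg derivative hg
  rw [derivative_mul, hW', derivative_add, derivative_pow, derivative_one] at hd
  have hmpos : 0 < m := by omega
  have hpow : D * D ^ (m - 1) = D ^ m := by rw [← pow_succ']; congr 1; omega
  have e1 : W * (2 * D * derivative g + derivative D * g) = 2 * D * g + derivative D := by
    simp only [map_natCast] at hd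
    linear_combination (-2 * D) * hd + (2 * m * derivative D) * hpow + (derivative D) * D^m * hm2 - derivative D * hg
  set Q := 2 * D * derivative g + derivative D * g with hQ
  have hd' : (derivative D).natDegree ≤ 3 := (natDegree_derivative_le D).trans (by omega)
  have hd'' : (derivative (derivative D)).natDegree ≤ 2 := (natDegree_derivative_le _).trans (by omega)
  have h2D : (2 * D).natDegree ≤ 4 := by
    have : (2 : (ZMod p)[X]) = C 2 := rfl
    rw [this]; exact (natDegree_C_mul_le _ _).trans hdeg
  have hQdeg : Q.natDegree ≤ 2 := by
    rcases key _ _ e1 with h | h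
    · have : (2 * D * g + derivative D).natDegree ≤ 4 + (p - 2) := by
        refine (natDegree_add_le _ _).trans (max_le ?_ (by omega))
        exact natDegree_mul_le.trans (add_le_add h2D hgdeg)
      omega
    · rw [h]; simp
  have e2 := congrArg derivative e1
  have d2 : derivative (2 : (ZMod p)[X]) = 0 := by
    have : (2 : (ZMod p)[X]) = C 2 := rfl
    rw [this, derivative_C]
  simp only [derivative_mul, derivative_add, hW', d2] at e2
  have e3 : W * (2 * D * derivative Q - derivative D * Q) =
      2 * D * (2 * Q) - derivative D * derivative D + 2 * D * derivative (derivative D) := by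
    linear_combination (2 * D) * e2 - derivative D * e1 + (-2 * D) * hQ
  have e4 : 2 * D * derivative Q - derivative D * Q = 0 := by
    rcases key _ _ e3 with h | h
    · have : (2 * D * (2 * Q) - derivative D * derivative D + 2 * D * derivative (derivative D)).natDegree ≤ 6 := by
        refine (natDegree_add_le _ _).trans (max_le ((natDegree_sub_le _ _).trans (max_le ?_ ?_)) ?_)
        · have : (2 * Q).natDegree ≤ 2 := by
            have : (2 : (ZMod p)[X]) = C 2 := rfl
            rw [this]; exact (natDegree_C_mul_le _ _).trans hQdeg
          exact natDegree_mul_le.trans (add_le_add h2D this)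
        · exact natDegree_mul_le.trans (add_le_add hd' hd')
        · exact natDegree_mul_le.trans (add_le_add h2D hd'')
      omega
    · exact h
  rw [e4, mul_zero] at e3
  have e5 : D ∣ derivative D * derivative D := ⟨4 * Q + 2 * derivative (derivative D), by linear_combination e3⟩
  exact hnc (hsep.isUnit_of_dvd' dvd_rfl (hsep.dvd_of_dvd_mul_left e5))

theorem step_quartic (p : ℕ) [Fact p.Prime] (hp : 7 ≤ p) (a b c : ZMod p) (hc : c ≠ 0)
    (hD : b ^ 2 - 4 * a * c ≠ 0) :
    ∃ y : ZMod p, IsSquare (a * y ^ 4 + b * y ^ 2 + c) ∧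
      (a * y ^ 4 + b * y ^ 2 + c = 0 → 4 * a * y ^ 3 + 2 * b * y ≠ 0) := by
  have h2 : (2 : ZMod p) ≠ 0 := by
    intro h
    have : ((2 : ℕ) : ZMod p) = 0 := by exact_mod_cast h
    rw [ZMod.natCast_eq_zero_iff] at this
    have := Nat.le_of_dvd (by norm_num) this
    omega
  have hu : ∀ y : ZMod p, a * y ^ 4 + b * y ^ 2 + c = 0 → 4 * a * y ^ 3 + 2 * b * y ≠ 0 := by
    intro y h1 h3
    have hy : y ≠ 0 := by
      rintro rfl; apply hc; simpa using h1
    have h4 : 2 * a * y ^ 2 + b = 0 := by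
      have : (2 * y) * (2 * a * y ^ 2 + b) = 0 := by linear_combination h3
      exact (mul_eq_zero.mp this).resolve_left (mul_ne_zero h2 hy)
    apply hD
    linear_combination (2 * a * y ^ 2 + b) * h4 - 4 * a * h1
  open Polynomial in
  set D : (ZMod p)[X] := C a * X ^ 4 + C b * X ^ 2 + C c with hDdef
  have hdeg : D.natDegree ≤ 4 := by rw [hDdef]; compute_degree
  have hder : derivative D = C (4 * a) * X ^ 3 + C (2 * b) * X := by
    have e4 : (C (4 : ZMod p)) = 4 := rfl
    have e3 : (C (3 : ZMod p)) = 3 := rfl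
    have e2 : (C (2 : ZMod p)) = 2 := rfl
    rw [hDdef]; simp [e4, e3, e2]; ring
  have hsep : IsCoprime D (derivative D) := by
    -- explicit Bezout
    set δ := b ^ 2 - 4 * a * c with hδ
    -- s * D + t * D' = 2 c δ
    have hb : (C (4 * a * b) * X ^ 2 + C (2 * b ^ 2 - 8 * a * c)) * D +
        (- (C (a * b) * X ^ 3 + C (b ^ 2 - 2 * a * c) * X)) * derivative D = C (2 * c * δ) := by
      rw [hder, hDdef, hδ]; simp only [map_sub, map_mul, map_pow, map_ofNat]; ring
    have hne : 2 * c * δ ≠ 0 := mul_ne_zero (mul_ne_zero h2 hc) hD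
    refine ⟨C (2 * c * δ)⁻¹ * (C (4 * a * b) * X ^ 2 + C (2 * b ^ 2 - 8 * a * c)),
      C (2 * c * δ)⁻¹ * (- (C (a * b) * X ^ 3 + C (b ^ 2 - 2 * a * c) * X)), ?_⟩
    rw [mul_assoc (C (2 * c * δ)⁻¹), mul_assoc (C (2 * c * δ)⁻¹), ← mul_add, hb, ← C_mul, inv_mul_cancel₀ hne, C_1]
  have hnc : ¬ IsUnit D := by
    intro h
    have hd0 := natDegree_eq_zero_of_isUnit h
    have ha : a = 0 := by
      have : D.coeff 4 = 0 := coeff_eq_zero_of_natDegree_lt (by omega)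
      simpa [hDdef, coeff_X, coeff_C] using this
    have hb : b = 0 := by
      have : D.coeff 2 = 0 := coeff_eq_zero_of_natDegree_lt (by omega)
      simpa [hDdef, coeff_X, coeff_C] using this
    apply hD; rw [ha, hb]; ring
  obtain ⟨y, hy⟩ := step_aux p hp D hdeg hsep hnc
  refine ⟨y, ?_, hu y⟩
  simpa [hDdef] using hy

open Polynomial in
theorem hens_quad (p : ℕ) [Fact p.Prime] (a b c t : ℤ_[p])
    (h : ‖a * t ^ 2 + b * t + c‖ < ‖2 * a * t + b‖ ^ 2) : ∃ s : ℤ_[p], a * s ^ 2 + b * s + c = 0 := by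
  have e2 : (C (2 : ℤ_[p])) = 2 := rfl
  obtain ⟨z, hz, -⟩ := hensels_lemma (p := p) (R := ℤ_[p]) (F := C a * X ^ 2 + C b * X + C c) (a := t) (by
    have e3 : a * ((1 + 1) * t) + b = 2 * a * t + b := by ring
    simpa [e2, e3] using h)
  exact ⟨z, by simpa using hz⟩

theorem hens_x (p : ℕ) [Fact p.Prime] (k : ℤ) (t y z : ℤ_[p])
    (h : ‖(t ^ 2 - 36) * (y ^ 2 - 36) * (z ^ 2 - 36) + 468 * (t * y * z - 4330) ^ 2 - k‖ <
      ‖2 * t * (y ^ 2 - 36) * (z ^ 2 - 36) + 936 * y * z * (t * y * z - 4330)‖ ^ 2) :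
    ∃ x y z : ℤ_[p],
    (x ^ 2 - 36) * (y ^ 2 - 36) * (z ^ 2 - 36) + 468 * (x * y * z - 4330) ^ 2 = (k : ℤ_[p]) := by
  obtain ⟨s, hs⟩ := hens_quad p ((y ^ 2 - 36) * (z ^ 2 - 36) + 468 * y ^ 2 * z ^ 2)
    (- 936 * 4330 * y * z) (-36 * (y ^ 2 - 36) * (z ^ 2 - 36) + 468 * 4330 ^ 2 - k) t (by
      convert h using 2
      · ring
      · congr 1; ring)
  exact ⟨s, y, z, by linear_combination hs⟩

theorem norm_lt_of_zmod (p : ℕ) [Fact p.Prime] (x : ℤ_[p]) : PadicInt.toZMod x = 0 ↔ ‖x‖ < 1 := by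
  rw [← RingHom.mem_ker, PadicInt.ker_toZMod, IsLocalRing.mem_maximalIdeal, PadicInt.mem_nonunits]

theorem local_of_smooth (p : ℕ) [Fact p.Prime] (k : ℤ) (x y z : ZMod p)
    (h : (x ^ 2 - 36) * (y ^ 2 - 36) * (z ^ 2 - 36) + 468 * (x * y * z - 4330) ^ 2 = (k : ZMod p))
    (h' : 2 * x * (y ^ 2 - 36) * (z ^ 2 - 36) + 936 * y * z * (x * y * z - 4330) ≠ 0) :
    ∃ x y z : ℤ_[p],
    (x ^ 2 - 36) * (y ^ 2 - 36) * (z ^ 2 - 36) + 468 * (x * y * z - 4330) ^ 2 = (k : ℤ_[p]) := by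
  have hs : ∀ x : ZMod p, ∃ X : ℤ_[p], PadicInt.toZMod X = x := fun x =>
    ⟨(x.val : ℤ_[p]), by rw [map_natCast]; exact ZMod.natCast_zmod_val x⟩
  obtain ⟨X, rfl⟩ := hs x
  obtain ⟨Y, rfl⟩ := hs y
  obtain ⟨Z, rfl⟩ := hs z
  apply hens_x p k X Y Z
  have h1 : ‖2 * X * (Y ^ 2 - 36) * (Z ^ 2 - 36) + 936 * Y * Z * (X * Y * Z - 4330)‖ = 1 := by
    by_contra hne
    apply h'
    have := (norm_lt_of_zmod p _).mpr (lt_of_le_of_ne (PadicInt.norm_le_one _) hne)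
    simpa [map_ofNat] using this
  rw [h1, one_pow, ← norm_lt_of_zmod]
  rw [← sub_eq_zero] at h
  simpa [map_ofNat] using h

theorem local_of_smooth' (p : ℕ) [Fact p.Prime] (k : ℤ) (x y z : ZMod p)
    (h : (x ^ 2 - 36) * (y ^ 2 - 36) * (z ^ 2 - 36) + 468 * (x * y * z - 4330) ^ 2 = (k : ZMod p))
    (h' : 2 * x * (y ^ 2 - 36) * (z ^ 2 - 36) + 936 * y * z * (x * y * z - 4330) ≠ 0 ∨
      2 * y * (x ^ 2 - 36) * (z ^ 2 - 36) + 936 * x * z * (x * y * z - 4330) ≠ 0) :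
    ∃ x y z : ℤ_[p],
    (x ^ 2 - 36) * (y ^ 2 - 36) * (z ^ 2 - 36) + 468 * (x * y * z - 4330) ^ 2 = (k : ℤ_[p]) := by
  rcases h' with h' | h'
  · exact local_of_smooth p k x y z h h'
  · exact local_of_smooth p k y x z (by rw [← h]; ring) (by convert h' using 1; ring)

open Polynomial in
theorem exists_good_z (p : ℕ) [Fact p.Prime] (hp : 17 ≤ p) (h6 : (6 : ZMod p) ≠ 0)
    (h13 : (13 : ZMod p) ≠ 0) (B k : ZMod p) :
    ∃ z : ZMod p, z ≠ 0 ∧ 36 * (z ^ 2 - 36) * (1296 * (z ^ 2 - 36) + B) ≠ 0 ∧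
      (-2592 * (z ^ 2 - 36) ^ 2 - 468 * 1296 * z ^ 2 * (z ^ 2 - 36) - B * (z ^ 2 - 36) +
        468 * k * z ^ 2) ^ 2 - 4 * (36 * (z ^ 2 - 36) * (469 * z ^ 2 - 36)) *
        (36 * (z ^ 2 - 36) * (1296 * (z ^ 2 - 36) + B)) ≠ 0 := by
  obtain ⟨b2, hb2⟩ : ∃ b2 : ZMod p, b2 = -609120 := ⟨_, rfl⟩
  obtain ⟨b1, hb1⟩ : ∃ b1 : ZMod p, b1 = 2592 * 72 + 606528 * 36 - B + 468 * k := ⟨_, rfl⟩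
  obtain ⟨b0, hb0⟩ : ∃ b0 : ZMod p, b0 = -2592 * 1296 + 36 * B := ⟨_, rfl⟩
  obtain ⟨a2, ha2⟩ : ∃ a2 : ZMod p, a2 = 36 * 469 := ⟨_, rfl⟩
  obtain ⟨a1, ha1⟩ : ∃ a1 : ZMod p, a1 = -36 * 36 * 470 := ⟨_, rfl⟩
  obtain ⟨a0, ha0⟩ : ∃ a0 : ZMod p, a0 = 36 * 1296 := ⟨_, rfl⟩
  obtain ⟨c2, hc2⟩ : ∃ c2 : ZMod p, c2 = 36 * 1296 := ⟨_, rfl⟩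
  obtain ⟨c1, hc1⟩ : ∃ c1 : ZMod p, c1 = 36 * (B - 93312) := ⟨_, rfl⟩
  obtain ⟨c0, hc0⟩ : ∃ c0 : ZMod p, c0 = -36 * 36 * (B - 46656) := ⟨_, rfl⟩
  obtain ⟨e4, he4⟩ : ∃ e : ZMod p, e = b2 ^ 2 - 4 * a2 * c2 := ⟨_, rfl⟩
  obtain ⟨e3, he3⟩ : ∃ e : ZMod p, e = 2 * b2 * b1 - 4 * (a2 * c1 + a1 * c2) := ⟨_, rfl⟩
  obtain ⟨e2, he2⟩ : ∃ e : ZMod p, e = b1 ^ 2 + 2 * b2 * b0 - 4 * (a2 * c0 + a1 * c1 + a0 * c2) := ⟨_, rfl⟩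
  obtain ⟨e1, he1⟩ : ∃ e : ZMod p, e = 2 * b1 * b0 - 4 * (a1 * c0 + a0 * c1) := ⟨_, rfl⟩
  obtain ⟨e0, he0⟩ : ∃ e : ZMod p, e = b0 ^ 2 - 4 * a0 * c0 := ⟨_, rfl⟩
  have h36 : (36 : ZMod p) ≠ 0 := by
    have : (36 : ZMod p) = 6 * 6 := by norm_num
    rw [this]; exact mul_ne_zero h6 h6
  have he4' : e4 ≠ 0 := by
    have : e4 = 36 ^ 6 * 13 ^ 2 := by rw [he4, hb2, ha2, hc2]; norm_num
    rw [this]; exact mul_ne_zero (pow_ne_zero _ h36) (pow_ne_zero _ h13)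
  set Q : (ZMod p)[X] := C e4 * X ^ 8 + C e3 * X ^ 6 + C e2 * X ^ 4 + C e1 * X ^ 2 + C e0 with hQ
  set R : (ZMod p)[X] := C c2 * X ^ 4 + C c1 * X ^ 2 + C c0 with hR
  have hQ0 : Q ≠ 0 := by
    intro h
    have : Q.coeff 8 = e4 := by simp [hQ]
    rw [h] at this; exact he4' (by simpa using this.symm)
  have hR0 : R ≠ 0 := by
    intro h
    have : R.coeff 4 = c2 := by simp [hR]
    rw [h] at this
    have h3 : c2 = 36 ^ 3 := by rw [hc2]; norm_num
    exact pow_ne_zero 3 h36 (by rw [← h3]; simpa using this.symm)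
  have hQd : Q.natDegree ≤ 8 := by rw [hQ]; compute_degree
  have hRd : R.natDegree ≤ 4 := by rw [hR]; compute_degree
  have hP0 : X * R * Q ≠ 0 := mul_ne_zero (mul_ne_zero X_ne_zero hR0) hQ0
  have hPd : (X * R * Q).natDegree ≤ 13 := by
    refine natDegree_mul_le.trans ?_
    have : (X * R).natDegree ≤ 1 + 4 := natDegree_mul_le.trans (add_le_add natDegree_X_le hRd)
    omega
  have : ∃ z : ZMod p, (X * R * Q).eval z ≠ 0 := by
    by_contra hcon
    push Not at hcon
    apply hP0
    apply Polynomial.eq_zero_of_natDegree_lt_card_of_eval_eq_zero (X * R * Q) (f := (id : ZMod p → ZMod p)) Function.injective_id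
    · exact hcon
    · rw [ZMod.card]; omega
  obtain ⟨z, hz⟩ := this
  simp only [eval_mul, eval_X] at hz
  have hz2 := right_ne_zero_of_mul hz
  have hz1 := left_ne_zero_of_mul hz
  refine ⟨z, left_ne_zero_of_mul hz1, ?_, ?_⟩
  · have := right_ne_zero_of_mul hz1
    intro h; apply this
    simp only [hR, eval_add, eval_mul, eval_C, eval_pow, eval_X]
    rw [hc2, hc1, hc0]
    linear_combination h
  · intro h; apply hz2
    simp only [hQ, eval_add, eval_mul, eval_C, eval_pow, eval_X]
    rw [he4, he3, he2, he1, he0, hb2, hb1, hb0, ha2, ha1, ha0, hc2, hc1, hc0]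
    linear_combination h

theorem exists_smooth (p : ℕ) [Fact p.Prime] (hp : 17 ≤ p) (h6 : (6 : ZMod p) ≠ 0)
    (h13 : (13 : ZMod p) ≠ 0) (h4330 : (4330 : ZMod p) ≠ 0) (k : ZMod p) :
    ∃ x y z : ZMod p,
      (x ^ 2 - 36) * (y ^ 2 - 36) * (z ^ 2 - 36) + 468 * (x * y * z - 4330) ^ 2 = k ∧
      (2 * x * (y ^ 2 - 36) * (z ^ 2 - 36) + 936 * y * z * (x * y * z - 4330) ≠ 0 ∨
      2 * y * (x ^ 2 - 36) * (z ^ 2 - 36) + 936 * x * z * (x * y * z - 4330) ≠ 0) := by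
  obtain ⟨B, hB⟩ : ∃ B : ZMod p, B = 468 * 4330 ^ 2 - k := ⟨_, rfl⟩
  obtain ⟨z, hz0, hz1, hz2⟩ := exists_good_z p hp h6 h13 B k
  obtain ⟨y, ⟨r, hr⟩, hy'⟩ := step_quartic p (by omega) _ _ _ hz1 hz2
  have h2 : (2 : ZMod p) ≠ 0 := by
    intro h; apply h6
    linear_combination 3 * h
  have h36 : (36 : ZMod p) ≠ 0 := by
    have : (36 : ZMod p) = 6 * 6 := by norm_num
    rw [this]; exact mul_ne_zero h6 h6
  have h468 : (468 : ZMod p) ≠ 0 := by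
    have : (468 : ZMod p) = 36 * 13 := by norm_num
    rw [this]; exact mul_ne_zero h36 h13
  have hh : z ^ 2 - 36 ≠ 0 := by
    intro h; apply hz1; rw [h]; ring
  obtain ⟨A, hA⟩ : ∃ A : ZMod p, A = (y ^ 2 - 36) * (z ^ 2 - 36) + 468 * y ^ 2 * z ^ 2 := ⟨_, rfl⟩
  obtain ⟨b, hb⟩ : ∃ b : ZMod p, b = - 468 * 4330 * y * z := ⟨_, rfl⟩
  obtain ⟨c, hc⟩ : ∃ c : ZMod p, c = -36 * (y ^ 2 - 36) * (z ^ 2 - 36) + 468 * 4330 ^ 2 - k := ⟨_, rfl⟩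
  have hD : b ^ 2 - A * c = r * r := by
    rw [← hr, hA, hb, hc, hB]; ring
  by_cases hA0 : A = 0
  · have hy0 : y ≠ 0 := by
      rintro rfl
      have : (36 : ZMod p) * (z ^ 2 - 36) = 0 := by linear_combination hA - hA0
      exact mul_ne_zero h36 hh this
    have hb0 : b ≠ 0 := by
      rw [hb]
      exact mul_ne_zero (mul_ne_zero (mul_ne_zero (neg_ne_zero.mpr h468) h4330) hy0) hz0
    have h2b : 2 * b ≠ 0 := mul_ne_zero h2 hb0
    obtain ⟨x, hx⟩ : ∃ x, 2 * b * x = - c := ⟨-c / (2 * b), by field_simp⟩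
    refine ⟨x, y, z, ?_, Or.inl ?_⟩
    · rw [hA] at hA0
      rw [hb, hc] at hx
      linear_combination hx + x ^ 2 * hA0
    · intro h; apply h2b
      rw [hA] at hA0
      rw [hb]; linear_combination h - 2 * x * hA0
  · obtain ⟨x, hx⟩ : ∃ x, A * x = - b + r := ⟨(- b + r) / A, by field_simp⟩
    have hF : A * x ^ 2 + 2 * b * x + c = 0 := by
      have : A * (A * x ^ 2 + 2 * b * x + c) = 0 := by
        linear_combination (A * x + b + r) * hx - hD
      exact (mul_eq_zero.mp this).resolve_left hA0
    refine ⟨x, y, z, ?_, ?_⟩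
    · rw [hA, hb, hc] at hF
      linear_combination hF
    · by_cases hr0 : r = 0
      · right
        have h3 := hy' (by rw [hr, hr0]; ring)
        intro h; apply h3
        subst hr0
        have hx' : A * x + b = 0 := by linear_combination hx
        -- derivative of discriminant is  -A * F_y
        rw [hA, hb] at hx'
        rw [hA, hb, hc] at hF
        rw [hB]
        linear_combination (2 * (-468 * 4330 * z)) * hx' -
          (2 * y * (z ^ 2 - 36) + 936 * y * z ^ 2) * (hF - 2 * x * hx') -
          ((y ^ 2 - 36) * (z ^ 2 - 36) + 468 * y ^ 2 * z ^ 2) * h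
      · left
        intro h
        have : 2 * r = 0 := by
          rw [hA, hb] at hx
          linear_combination h - 2 * hx
        exact mul_ne_zero h2 hr0 this

theorem local_two (l : ℤ) (hl : l % 2 = 1) [Fact (Nat.Prime 2)] : ∃ x y z : ℤ_[2],
    (x ^ 2 - 36) * (y ^ 2 - 36) * (z ^ 2 - 36) + 468 * (x * y * z - 4330) ^ 2 = ((l ^ 2 : ℤ) : ℤ_[2]) := by
  apply hens_x 2 (l ^ 2) 1 1 1
  have h1 : ((1 : ℤ_[2]) ^ 2 - 36) * (1 ^ 2 - 36) * (1 ^ 2 - 36) + 468 * (1 * 1 * 1 - 4330) ^ 2 - ((l ^ 2 : ℤ) : ℤ_[2])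
      = (((-35) ^ 3 + 468 * 4329 ^ 2 - l ^ 2 : ℤ) : ℤ_[2]) := by push_cast; norm_num
  have h2 : 2 * (1 : ℤ_[2]) * (1 ^ 2 - 36) * (1 ^ 2 - 36) + 936 * 1 * 1 * (1 * 1 * 1 - 4330)
      = ((2 : ℕ) : ℤ_[2]) * ((1225 - 468 * 4329 : ℤ) : ℤ_[2]) := by push_cast; norm_num
  rw [h1, h2, norm_mul, PadicInt.norm_p]
  have h3 : ‖((1225 - 468 * 4329 : ℤ) : ℤ_[2])‖ = 1 := by
    by_contra hne
    have := (PadicInt.norm_int_lt_one_iff_dvd _).mp (lt_of_le_of_ne (PadicInt.norm_le_one _) hne)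
    norm_num at this
  have h4 : ‖(((-35) ^ 3 + 468 * 4329 ^ 2 - l ^ 2 : ℤ) : ℤ_[2])‖ ≤ ((2 : ℕ) : ℝ) ^ (-((3 : ℕ) : ℤ)) := by
    rw [PadicInt.norm_int_le_pow_iff_dvd]
    have : l ^ 2 % 8 = 1 := by
      have : l % 8 = 1 ∨ l % 8 = 3 ∨ l % 8 = 5 ∨ l % 8 = 7 := by omega
      rcases this with h | h | h | h <;> simp [pow_two, Int.mul_emod, h]
    norm_num
    omega
  rw [h3]
  refine lt_of_le_of_lt h4 ?_
  norm_num

theorem aux3a : ∀ l : ZMod 3, l ≠ 0 → ((1 : ZMod 3) ^ 2 - 36) * (1 ^ 2 - 36) * (1 ^ 2 - 36) + 468 * (1 * 1 * 1 - 4330) ^ 2 = l ^ 2 := by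
  decide
theorem aux3b : 2 * (1 : ZMod 3) * (1 ^ 2 - 36) * (1 ^ 2 - 36) + 936 * 1 * 1 * (1 * 1 * 1 - 4330) ≠ 0 := by
  decide
theorem aux13a : ((1 : ZMod 13) ^ 2 - 36) * (0 ^ 2 - 36) * (3 ^ 2 - 36) + 468 * (1 * 0 * 3 - 4330) ^ 2 = 1 ^ 2 := by
  decide
theorem aux13b : 2 * (1 : ZMod 13) * (0 ^ 2 - 36) * (3 ^ 2 - 36) + 936 * 0 * 3 * (1 * 0 * 3 - 4330) ≠ 0 := by
  decide
theorem aux5 : ∀ l : ZMod 5, l ≠ 0 → ∃ x y z : ZMod 5,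
    (x ^ 2 - 36) * (y ^ 2 - 36) * (z ^ 2 - 36) + 468 * (x * y * z - 4330) ^ 2 = l ^ 2 ∧
    2 * x * (y ^ 2 - 36) * (z ^ 2 - 36) + 936 * y * z * (x * y * z - 4330) ≠ 0 := by
  decide
theorem aux7 : ∀ l : ZMod 7, l ≠ 0 → ∃ z y x : ZMod 7,
    (x ^ 2 - 36) * (y ^ 2 - 36) * (z ^ 2 - 36) + 468 * (x * y * z - 4330) ^ 2 = l ^ 2 ∧
    2 * x * (y ^ 2 - 36) * (z ^ 2 - 36) + 936 * y * z * (x * y * z - 4330) ≠ 0 := by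
  decide
theorem aux11 : ∀ l : ZMod 11, l ≠ 0 → ∃ z y x : ZMod 11,
    (x ^ 2 - 36) * (y ^ 2 - 36) * (z ^ 2 - 36) + 468 * (x * y * z - 4330) ^ 2 = l ^ 2 ∧
    2 * x * (y ^ 2 - 36) * (z ^ 2 - 36) + 936 * y * z * (x * y * z - 4330) ≠ 0 := by
  decide

theorem zmod_ne_zero_of_dvd (p n : ℕ) [Fact p.Prime] (h : ¬ p ∣ n) : (n : ZMod p) ≠ 0 := by
  rwa [Ne, ZMod.natCast_eq_zero_iff]

theorem local_split (p : ℕ) [Fact p.Prime] (hp : 5 ≤ p) (hp13 : p ≠ 13)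
    (hsq : IsSquare (13 : ZMod p)) (l : ℤ) : ∃ x y z : ℤ_[p],
    (x ^ 2 - 36) * (y ^ 2 - 36) * (z ^ 2 - 36) + 468 * (x * y * z - 4330) ^ 2 = ((l ^ 2 : ℤ) : ℤ_[p]) := by
  have hpp : p.Prime := Fact.out
  have h13 : (13 : ZMod p) ≠ 0 := by
    have := zmod_ne_zero_of_dvd p 13 (fun h => hp13 ((Nat.prime_dvd_prime_iff_eq hpp (by norm_num)).mp h))
    exact_mod_cast this
  have h2 : (2 : ZMod p) ≠ 0 := by
    have := zmod_ne_zero_of_dvd p 2 (fun h => by have := Nat.le_of_dvd (by norm_num) h; omega)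
    exact_mod_cast this
  have h3 : (3 : ZMod p) ≠ 0 := by
    have := zmod_ne_zero_of_dvd p 3 (fun h => by have := Nat.le_of_dvd (by norm_num) h; omega)
    exact_mod_cast this
  obtain ⟨s, hs⟩ := hsq
  have hs0 : s ≠ 0 := by rintro rfl; apply h13; rw [hs]; ring
  obtain ⟨S, rfl⟩ : ∃ X : ℤ_[p], PadicInt.toZMod X = s :=
    ⟨(s.val : ℤ_[p]), by rw [map_natCast]; exact ZMod.natCast_zmod_val s⟩
  have unit_of : ∀ u : ℤ_[p], PadicInt.toZMod u ≠ 0 → ‖u‖ = 1 := by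
    intro u hu
    by_contra hne
    exact hu ((norm_lt_of_zmod p u).mpr (lt_of_le_of_ne (PadicInt.norm_le_one _) hne))
  obtain ⟨r, hr⟩ := hens_quad p 1 0 (-13) S (by
    have e1 : ‖2 * 1 * S + 0‖ = 1 := by
      apply unit_of
      simpa [map_ofNat] using ⟨h2, hs0⟩
    rw [e1, one_pow, ← norm_lt_of_zmod]
    simp only [map_add, map_mul, map_pow, map_neg, map_ofNat, map_one, map_zero]
    rw [hs]; ring)
  have hr' : r ^ 2 = 13 := by linear_combination hr
  have hu : ‖36 * r‖ = 1 := by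
    apply unit_of
    intro h
    have h5 : (PadicInt.toZMod r) ^ 2 = 13 := by
      rw [← map_pow, hr', map_ofNat]
    rw [map_mul, map_ofNat] at h
    have h36 : (36 : ZMod p) ≠ 0 := by
      have : (36 : ZMod p) = (2 * 3) ^ 2 := by norm_num
      rw [this]; exact pow_ne_zero 2 (mul_ne_zero h2 h3)
    have := (mul_eq_zero.mp h).resolve_left h36
    rw [this] at h5; apply h13; rw [← h5]; ring
  obtain ⟨w, hw⟩ := (PadicInt.isUnit_iff.mpr hu).exists_right_inv
  refine ⟨6, 1, (l + 6 * r * 4330) * w, ?_⟩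
  have e : 6 * r * (6 * 1 * ((l + 6 * r * 4330) * w) - 4330) = l := by
    linear_combination (l + 6 * r * 4330) * hw
  push_cast
  linear_combination (6 * r * (6 * 1 * ((l + 6 * r * 4330) * w) - 4330) + l) * e + (-36 * (6 * 1 * ((l + 6 * r * 4330) * w) - 4330) ^ 2) * hr'

theorem local_all (l : ℤ) (h2 : l % 2 = 1) (h3 : l % 3 ≠ 0) (h13 : l % 13 = 1)
    (hq : ∀ q : ℕ, q.Prime → (q : ℤ) ∣ l → IsSquare (13 : ZMod q)) (p : ℕ) [Fact p.Prime] :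
    ∃ x y z : ℤ_[p],
    (x ^ 2 - 36) * (y ^ 2 - 36) * (z ^ 2 - 36) + 468 * (x * y * z - 4330) ^ 2 = ((l ^ 2 : ℤ) : ℤ_[p]) := by
  have hpp : p.Prime := Fact.out
  by_cases p2 : p = 2
  · subst p2; exact local_two l h2
  by_cases p3 : p = 3
  · subst p3
    refine local_of_smooth 3 _ 1 1 1 ?_ aux3b
    push_cast
    apply aux3a
    intro h
    rw [ZMod.intCast_zmod_eq_zero_iff_dvd] at h
    omega
  by_cases p13 : p = 13
  · subst p13
    refine local_of_smooth 13 _ 1 0 3 ?_ aux13b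
    have : (l : ZMod 13) = 1 := by
      have := (ZMod.intCast_eq_intCast_iff l 1 13).mpr (by rw [Int.ModEq]; simpa using h13)
      simpa using this
    push_cast
    rw [this]; exact aux13a
  have hp5 : 5 ≤ p := by
    have := hpp.two_le
    by_contra h
    have : p = 4 := by omega
    subst this; revert hpp; norm_num
  by_cases hsq : IsSquare (13 : ZMod p)
  · exact local_split p hp5 p13 hsq l
  have hl0 : (l : ZMod p) ≠ 0 := by
    intro h
    rw [ZMod.intCast_zmod_eq_zero_iff_dvd] at h
    exact hsq (hq p hpp h)
  by_cases hp17 : 17 ≤ p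
  · have hd : ∀ n : ℕ, ¬ p ∣ n → (n : ZMod p) ≠ 0 := fun n => zmod_ne_zero_of_dvd p n
    have h6 : (6 : ZMod p) ≠ 0 := by
      have := hd 6 (fun h => by have := Nat.le_of_dvd (by norm_num) h; omega)
      exact_mod_cast this
    have h13' : (13 : ZMod p) ≠ 0 := by
      have := hd 13 (fun h => by have := Nat.le_of_dvd (by norm_num) h; omega)
      exact_mod_cast this
    have h4330 : (4330 : ZMod p) ≠ 0 := by
      have := hd 4330 (fun h => by
        have e : (4330 : ℕ) = 10 * 433 := by norm_num
        rw [e, hpp.dvd_mul] at h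
        rcases h with h | h
        · have := Nat.le_of_dvd (by norm_num) h; omega
        · rw [Nat.prime_dvd_prime_iff_eq hpp (by norm_num)] at h
          subst h
          exact hsq ⟨130, by reduce_mod_char⟩)
      exact_mod_cast this
    obtain ⟨x, y, z, h, h'⟩ := exists_smooth p hp17 h6 h13' h4330 ((l ^ 2 : ℤ) : ZMod p)
    exact local_of_smooth' p _ x y z h h'
  · have : p = 5 ∨ p = 7 ∨ p = 11 := by
      push Not at hp17
      interval_cases p <;> first | omega | (exfalso; revert hpp; norm_num; done)
    rcases this with rfl | rfl | rfl
    · obtain ⟨x, y, z, h, h'⟩ := aux5 _ hl0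
      exact local_of_smooth 5 _ x y z (by rw [h]; push_cast; rfl) h'
    · obtain ⟨z, y, x, h, h'⟩ := aux7 _ hl0
      exact local_of_smooth 7 _ x y z (by rw [h]; push_cast; rfl) h'
    · obtain ⟨z, y, x, h, h'⟩ := aux11 _ hl0
      exact local_of_smooth 11 _ x y z (by rw [h]; push_cast; rfl) h'

theorem neg1sq : IsSquare (-1 : ZMod 13) := ⟨5, by decide⟩

theorem sq_mod13 (l : ℤ) (n t w : ℤ) (hn : n % 2 = 1) (h13 : l % 13 = 1)
    (hq : ∀ q : ℕ, q.Prime → (q : ℤ) ∣ l → IsSquare (13 : ZMod q))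
    (h : n * t = l ^ 2 - 13 * w ^ 2) : IsSquare (n : ZMod 13) := by
  have : Fact (Nat.Prime 13) := ⟨by norm_num⟩
  have hodd : Odd n.natAbs := by
    rw [Int.natAbs_odd]; exact Int.odd_iff.mpr hn
  have key : ∀ q : ℕ, q.Prime → q ∣ n.natAbs → IsSquare (13 : ZMod q) := by
    intro q hqp hqn
    have : Fact q.Prime := ⟨hqp⟩
    have hqn' : (q : ℤ) ∣ n := Int.natCast_dvd.mpr hqn
    have h1 : (q : ℤ) ∣ l ^ 2 - 13 * w ^ 2 := by rw [← h]; exact Dvd.dvd.mul_right hqn' t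
    by_cases hw : (w : ZMod q) = 0
    · have hw' := (ZMod.intCast_zmod_eq_zero_iff_dvd w q).mp hw
      have : (q : ℤ) ∣ l ^ 2 := by
        have h2 : (q : ℤ) ∣ 13 * w ^ 2 := Dvd.dvd.mul_left (dvd_pow hw' two_ne_zero) _
        have := dvd_add h1 h2
        simpa using this
      exact hq q hqp ((Nat.prime_iff_prime_int.mp hqp).dvd_of_dvd_pow this)
    · have h2 := (ZMod.intCast_zmod_eq_zero_iff_dvd _ q).mpr h1
      push_cast at h2
      refine ⟨l / w, ?_⟩
      field_simp
      linear_combination -h2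
  have hJ : jacobiSym 13 n.natAbs ≠ -1 := by
    intro hJ
    obtain ⟨q, hqp, hqn, hj⟩ := jacobiSym.eq_neg_one_at_prime_divisor_of_eq_neg_one hJ
    have : Fact q.Prime := ⟨hqp⟩
    have := ZMod.nonsquare_of_jacobiSym_eq_neg_one hj
    apply this
    simpa using key q hqp hqn
  have hJ2 : jacobiSym n.natAbs 13 ≠ -1 := by
    have := jacobiSym.quadratic_reciprocity_one_mod_four' (a := n.natAbs) (b := 13) hodd (by norm_num)
    rw [this]; exact_mod_cast hJ
  have hsq : IsSquare ((n.natAbs : ℤ) : ZMod 13) := by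
    by_contra hns
    exact hJ2 (ZMod.nonsquare_iff_jacobiSym_eq_neg_one.mpr hns)
  rcases Int.natAbs_eq n with hn' | hn'
  · rw [hn']; exact hsq
  · rw [hn', Int.cast_neg, ← neg_one_mul]
    exact IsSquare.mul neg1sq hsq

theorem mod13_aux : ∀ x : ZMod 13, IsSquare (x - 6) → IsSquare (x + 6) → x ^ 2 - 36 = 0 ∨ x ^ 2 - 36 = -1 := by
  decide

theorem mod13_aux' : ∀ a b c : ZMod 13, (a = 0 ∨ a = -1) → (b = 0 ∨ b = -1) → (c = 0 ∨ c = -1) →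
    a * b * c ≠ 1 := by
  rintro a b c (rfl | rfl) (rfl | rfl) (rfl | rfl) <;> decide

theorem no_int (l : ℤ) (h2 : l % 2 = 1) (h13 : l % 13 = 1)
    (hq : ∀ q : ℕ, q.Prime → (q : ℤ) ∣ l → IsSquare (13 : ZMod q)) (x y z : ℤ)
    (h : (x ^ 2 - 36) * (y ^ 2 - 36) * (z ^ 2 - 36) + 468 * (x * y * z - 4330) ^ 2 = l ^ 2) : False := by
  have hl : Odd l := Int.odd_iff.mpr h2
  have hodd : Odd ((x ^ 2 - 36) * (y ^ 2 - 36) * (z ^ 2 - 36)) := by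
    have e : (x ^ 2 - 36) * (y ^ 2 - 36) * (z ^ 2 - 36) = l ^ 2 - 2 * (234 * (x * y * z - 4330) ^ 2) := by
      linear_combination h
    rw [e]; exact hl.pow.sub_even (even_two_mul _)
  rw [Int.odd_mul, Int.odd_mul] at hodd
  have od : ∀ t : ℤ, Odd (t ^ 2 - 36) → t % 2 = 1 := by
    intro t ht
    by_contra hc
    have : Even t := Int.even_iff.mpr (by omega)
    have h3 : Even (t ^ 2 - 36) := (this.pow_of_ne_zero two_ne_zero).sub ⟨18, by norm_num⟩
    exact (Int.not_odd_iff_even.mpr h3) ht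
  obtain ⟨⟨hx, hy⟩, hz⟩ := hodd
  replace hx := od x hx
  replace hy := od y hy
  replace hz := od z hz
  have main : ∀ t s : ℤ, t % 2 = 1 → (t ^ 2 - 36) * s = l ^ 2 - 13 * (6 * (x * y * z - 4330)) ^ 2 →
      ((t : ZMod 13) ^ 2 - 36 = 0 ∨ (t : ZMod 13) ^ 2 - 36 = -1) := by
    intro t s ht hts
    have h1 := sq_mod13 l (t - 6) ((t + 6) * s) (6 * (x * y * z - 4330)) (by omega) h13 hq (by rw [← hts]; ring)
    have h3 := sq_mod13 l (t + 6) ((t - 6) * s) (6 * (x * y * z - 4330)) (by omega) h13 hq (by rw [← hts]; ring)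
    push_cast at h1 h3
    exact mod13_aux _ h1 h3
  have mx := main x ((y ^ 2 - 36) * (z ^ 2 - 36)) hx (by linear_combination h)
  have my := main y ((x ^ 2 - 36) * (z ^ 2 - 36)) hy (by linear_combination h)
  have mz := main z ((x ^ 2 - 36) * (y ^ 2 - 36)) hz (by linear_combination h)
  apply mod13_aux' _ _ _ mx my mz
  have hl1 : (l : ZMod 13) = 1 := by
    have := (ZMod.intCast_eq_intCast_iff l 1 13).mpr (by rw [Int.ModEq]; simpa using h13)
    simpa using this
  have h468 : (468 : ZMod 13) = 0 := by decide
  have := congrArg (Int.cast : ℤ → ZMod 13) h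
  push_cast at this
  rw [hl1, h468] at this
  linear_combination this

theorem real_pt (l : ℤ) : ∃ x y z : ℝ,
    (x ^ 2 - 36) * (y ^ 2 - 36) * (z ^ 2 - 36) + 468 * (x * y * z - 4330) ^ 2 = ((l ^ 2 : ℤ) : ℝ) := by
  have hr : (Real.sqrt 13) ^ 2 = 13 := Real.sq_sqrt (by norm_num)
  have h0 : Real.sqrt 13 ≠ 0 := by positivity
  refine ⟨6, 1, (4330 + l / (6 * Real.sqrt 13)) / 6, ?_⟩
  have e : 6 * Real.sqrt 13 * (6 * 1 * ((4330 + l / (6 * Real.sqrt 13)) / 6) - 4330) = l := by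
    field_simp; ring
  push_cast
  set D := (6 * 1 * ((4330 + l / (6 * Real.sqrt 13)) / 6) - 4330)
  linear_combination (6 * Real.sqrt 13 * D + l) * e + (-36 * D ^ 2) * hr

theorem good_of_pair (u v : ℤ) (hu : u % 78 = 1) (hv : v % 6 = 0) (huv : IsCoprime u v) :
    (u ^ 2 - 13 * v ^ 2) % 2 = 1 ∧ (u ^ 2 - 13 * v ^ 2) % 3 ≠ 0 ∧ (u ^ 2 - 13 * v ^ 2) % 13 = 1 ∧
    ∀ q : ℕ, q.Prime → (q : ℤ) ∣ (u ^ 2 - 13 * v ^ 2) → IsSquare (13 : ZMod q) := by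
  obtain ⟨a, ha⟩ : ∃ a, u = 78 * a + 1 := ⟨u / 78, by omega⟩
  obtain ⟨b, hb⟩ : ∃ b, v = 6 * b := ⟨v / 6, by omega⟩
  have e : u ^ 2 - 13 * v ^ 2 = 78 * (78 * a ^ 2 + 2 * a - 6 * b ^ 2) + 1 := by rw [ha, hb]; ring
  refine ⟨by omega, by omega, by omega, ?_⟩
  intro q hqp hq
  have : Fact q.Prime := ⟨hqp⟩
  have h2 := (ZMod.intCast_zmod_eq_zero_iff_dvd _ q).mpr hq
  push_cast at h2
  have hv0 : (v : ZMod q) ≠ 0 := by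
    intro hv0
    have hu0 : (u : ZMod q) = 0 := by
      rw [hv0] at h2
      have : (u : ZMod q) ^ 2 = 0 := by linear_combination h2
      exact pow_eq_zero_iff two_ne_zero |>.mp this
    have d1 := (ZMod.intCast_zmod_eq_zero_iff_dvd _ q).mp hu0
    have d2 := (ZMod.intCast_zmod_eq_zero_iff_dvd _ q).mp hv0
    have := huv.isUnit_of_dvd' d1 d2
    exact (Nat.prime_iff_prime_int.mp hqp).not_isUnit this
  refine ⟨u / v, ?_⟩
  field_simp
  linear_combination -h2

open Finset in
theorem quad_count (L : ℕ) (hL : 1 ≤ L) :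
    ((((Icc 1 L ×ˢ Icc 1 L) ×ˢ (Icc 1 L ×ˢ Icc 1 L)).filter
      (fun q => q.1.1 * q.1.2 = q.2.1 * q.2.2)).card : ℝ) ≤ 2 * (L : ℝ) ^ 2 * (1 + Real.log L) := by
  classical
  set S := ((Icc 1 L ×ˢ Icc 1 L) ×ˢ (Icc 1 L ×ˢ Icc 1 L)).filter
      (fun q : (ℕ × ℕ) × (ℕ × ℕ) => q.1.1 * q.1.2 = q.2.1 * q.2.2) with hS
  set T : Finset (Σ _ : ℕ × ℕ, ℕ × ℕ) := (Icc 1 L ×ˢ Icc 1 L).sigma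
    (fun a => Icc 1 (L / max a.1 a.2) ×ˢ Icc 1 (L / max a.1 a.2)) with hT
  have hsub : S ⊆ T.image (fun s => ((s.2.1 * s.1.1, s.1.2 * s.2.2), (s.2.1 * s.1.2, s.1.1 * s.2.2))) := by
    rintro ⟨⟨A, B⟩, ⟨C, D⟩⟩ hq
    simp only [hS, mem_filter, mem_product, mem_Icc] at hq
    obtain ⟨⟨⟨⟨hA1, hA2⟩, hB1, hB2⟩, ⟨hC1, hC2⟩, hD1, hD2⟩, he⟩ := hq
    obtain ⟨g, a, c, hg, hac, hA, hC⟩ := Nat.exists_coprime' (m := A) (n := C) (Nat.gcd_pos_of_pos_left _ hA1)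
    have ha0 : 0 < a := Nat.pos_of_ne_zero (by rintro rfl; simp at hA; omega)
    have hc0 : 0 < c := Nat.pos_of_ne_zero (by rintro rfl; simp at hC; omega)
    have he2 : a * B = c * D := by
      rw [hA, hC] at he
      have : g * (a * B) = g * (c * D) := by rw [← mul_assoc, ← mul_assoc, mul_comm g a, mul_comm g c]; exact he
      exact Nat.eq_of_mul_eq_mul_left hg this
    have hcB : c ∣ B := (hac.symm).dvd_of_dvd_mul_left (Dvd.intro _ he2.symm)
    obtain ⟨t, ht⟩ := hcB
    have hD : D = a * t := by
      rw [ht] at he2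
      apply Nat.eq_of_mul_eq_mul_left hc0
      rw [← he2]; ring
    have ht0 : 0 < t := Nat.pos_of_ne_zero (by rintro rfl; simp at ht; omega)
    have hm : 0 < max a c := lt_max_of_lt_left ha0
    rw [mem_image]
    refine ⟨⟨(a, c), (g, t)⟩, ?_, ?_⟩
    · simp only [hT, mem_sigma, mem_product, mem_Icc, Nat.le_div_iff_mul_le hm]
      have h1 : a ≤ A := by rw [hA]; exact Nat.le_mul_of_pos_right _ hg
      have h2 : c ≤ C := by rw [hC]; exact Nat.le_mul_of_pos_right _ hg
      refine ⟨⟨⟨ha0, by omega⟩, hc0, by omega⟩, ⟨hg, ?_⟩, ht0, ?_⟩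
      · rcases max_choice a c with h | h <;> rw [h, mul_comm]
        · rw [← hA]; exact hA2
        · rw [← hC]; exact hC2
      · rcases max_choice a c with h | h <;> rw [h, mul_comm]
        · rw [← hD]; exact hD2
        · rw [← ht]; exact hB2
    · simp only [Prod.mk.injEq]
      exact ⟨⟨by rw [hA, mul_comm], ht.symm⟩, by rw [hC, mul_comm], hD.symm⟩
  have hcard : S.card ≤ ∑ a ∈ Icc 1 L ×ˢ Icc 1 L, (L / max a.1 a.2) * (L / max a.1 a.2) := by
    refine (card_le_card hsub).trans (card_image_le.trans ?_)
    rw [hT, card_sigma]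
    simp
  have h1 : (S.card : ℝ) ≤ ∑ a ∈ Icc 1 L, ∑ c ∈ Icc 1 L, ((if c ≤ a then (L : ℝ) ^ 2 * (1 / (a : ℝ) ^ 2) else 0) +
      (if a ≤ c then (L : ℝ) ^ 2 * (1 / (c : ℝ) ^ 2) else 0)) := by
    refine (Nat.cast_le.mpr hcard).trans ?_
    rw [sum_product]
    push_cast
    refine sum_le_sum fun a ha => sum_le_sum fun c hc => ?_
    have hd : ∀ m : ℕ, ((L / m : ℕ) : ℝ) * ((L / m : ℕ) : ℝ) ≤ (L : ℝ) ^ 2 * (1 / (m : ℝ) ^ 2) := by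
      intro m
      have h := Nat.cast_div_le (α := ℝ) (m := L) (n := m)
      have h0 : (0 : ℝ) ≤ ((L / m : ℕ) : ℝ) := Nat.cast_nonneg _
      calc ((L / m : ℕ) : ℝ) * ((L / m : ℕ) : ℝ) ≤ ((L : ℝ) / m) * ((L : ℝ) / m) := mul_le_mul h h h0 (h0.trans h)
        _ = _ := by ring
    have hp : ∀ m : ℕ, (0 : ℝ) ≤ (L : ℝ) ^ 2 * (1 / (m : ℝ) ^ 2) := fun m => by positivity
    rcases le_total a c with h | h
    · rw [max_eq_right h, if_pos h]
      have : (0 : ℝ) ≤ (if c ≤ a then (L : ℝ) ^ 2 * (1 / (a : ℝ) ^ 2) else 0) := by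
        split_ifs
        · exact hp a
        · exact le_rfl
      linarith [hd c]
    · rw [max_eq_left h, if_pos h]
      have : (0 : ℝ) ≤ (if a ≤ c then (L : ℝ) ^ 2 * (1 / (c : ℝ) ^ 2) else 0) := by
        split_ifs
        · exact hp c
        · exact le_rfl
      linarith [hd a]
  have h2 : ∑ a ∈ Icc 1 L, ∑ c ∈ Icc 1 L, (if c ≤ a then (L : ℝ) ^ 2 * (1 / (a : ℝ) ^ 2) else 0) ≤
      (L : ℝ) ^ 2 * (1 + Real.log L) := by
    have hh : ∑ a ∈ Icc 1 L, ((a : ℝ))⁻¹ ≤ 1 + Real.log L := by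
      have := harmonic_le_one_add_log L
      rw [harmonic_eq_sum_Icc] at this
      push_cast at this
      exact this
    refine le_trans ?_ (mul_le_mul_of_nonneg_left hh (by positivity))
    rw [mul_sum]
    refine sum_le_sum fun a ha => ?_
    rw [← sum_filter, sum_const, nsmul_eq_mul]
    have ha1 : 1 ≤ a := (mem_Icc.mp ha).1
    have hc : (filter (fun c => c ≤ a) (Icc 1 L)).card ≤ a := by
      have : filter (fun c => c ≤ a) (Icc 1 L) ⊆ Icc 1 a := by
        intro c hc
        rw [mem_filter, mem_Icc] at hc
        rw [mem_Icc]; omega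
      simpa using card_le_card this
    have ha' : (0 : ℝ) < a := by exact_mod_cast ha1
    calc ((filter (fun c => c ≤ a) (Icc 1 L)).card : ℝ) * ((L : ℝ) ^ 2 * (1 / (a : ℝ) ^ 2))
        ≤ (a : ℝ) * ((L : ℝ) ^ 2 * (1 / (a : ℝ) ^ 2)) := by gcongr
      _ = (L : ℝ) ^ 2 * (a : ℝ)⁻¹ := by field_simp
  have h3 : ∑ a ∈ Icc 1 L, ∑ c ∈ Icc 1 L, (if a ≤ c then (L : ℝ) ^ 2 * (1 / (c : ℝ) ^ 2) else 0) ≤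
      (L : ℝ) ^ 2 * (1 + Real.log L) := by
    rw [sum_comm]; exact h2
  simp only [sum_add_distrib] at h1
  linarith

/-- the set of admissible pairs -/
def pairSet (N : ℕ) : Finset (ℕ × ℕ) :=
  (Finset.Ico N (2 * N) ×ˢ Finset.Icc 1 N).filter (fun q => Nat.Coprime (78 * q.1 + 1) q.2)

open Finset in
theorem pair_count (N : ℕ) (hN : 5 ≤ N) : (N : ℝ) ^ 2 / 2 ≤ ((pairSet N).card : ℝ) := by
  classical
  set U := (Ico N (2 * N) ×ˢ Icc 1 N) with hU
  have hUc : U.card = N * N := by simp [hU]; left; omega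
  have hsplit := card_filter_add_card_filter_not (s := U) (fun q : ℕ × ℕ => Nat.Coprime (78 * q.1 + 1) q.2)
  set V := U.filter (fun q : ℕ × ℕ => ¬ Nat.Coprime (78 * q.1 + 1) q.2) with hV
  have hsub : V ⊆ ((Ioc 4 N).filter (fun q => Nat.Coprime q 78)).biUnion (fun q =>
      ((Ico N (2 * N)).filter (fun a => q ∣ 78 * a + 1)) ×ˢ ((Ioc 0 N).filter (fun b => q ∣ b))) := by
    rintro ⟨a, b⟩ h
    simp only [hV, hU, mem_filter, mem_product, mem_Ico, mem_Icc] at h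
    obtain ⟨⟨⟨h1, h2⟩, h3, h4⟩, h5⟩ := h
    obtain ⟨q, hq, hqa, hqb⟩ := Nat.Prime.not_coprime_iff_dvd.mp h5
    have hq78 : Nat.Coprime q 78 := by
      rw [hq.coprime_iff_not_dvd]
      intro hd
      have : q ∣ 1 := (Nat.dvd_add_right (Dvd.dvd.mul_right hd a)).mp hqa
      exact hq.one_lt.ne' (Nat.dvd_one.mp this)
    have hq5 : 4 < q := by
      by_contra hc
      have h2 := hq.two_le
      interval_cases q <;> first | (revert hq78; decide) | (revert hq; decide)
    have hqN : q ≤ N := (Nat.le_of_dvd (by omega) hqb).trans h4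
    simp only [mem_biUnion, mem_filter, mem_product, mem_Ico, mem_Ioc]
    exact ⟨q, ⟨⟨hq5, hqN⟩, hq78⟩, ⟨⟨h1, h2⟩, hqa⟩, ⟨by omega, h4⟩, hqb⟩
  have hterm : ∀ q ∈ (Ioc 4 N).filter (fun q => Nat.Coprime q 78),
      ((((Ico N (2 * N)).filter (fun a => q ∣ 78 * a + 1)) ×ˢ ((Ioc 0 N).filter (fun b => q ∣ b))).card : ℝ)
        ≤ 2 * (N : ℝ) ^ 2 * ((q : ℝ) ^ 2)⁻¹ := by
    intro q hq
    rw [mem_filter, mem_Ioc] at hq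
    obtain ⟨⟨hq4, hqN⟩, hq78⟩ := hq
    have hq0 : (0 : ℝ) < q := by exact_mod_cast (by omega : 0 < q)
    have c2 : (((Ioc 0 N).filter (fun b => q ∣ b)).card : ℝ) ≤ N / q := by
      rw [Nat.Ioc_filter_dvd_card_eq_div]; exact Nat.cast_div_le
    have c1 : (((Ico N (2 * N)).filter (fun a => q ∣ 78 * a + 1)).card : ℝ) ≤ N / q + 1 := by
      rcases ((Ico N (2 * N)).filter (fun a => q ∣ 78 * a + 1)).eq_empty_or_nonempty with h | ⟨a0, h0⟩
      · rw [h]; simp; positivity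
      · rw [mem_filter] at h0
        have hs : (Ico N (2 * N)).filter (fun a => q ∣ 78 * a + 1) ⊆ (Ico N (2 * N)).filter (fun a => a ≡ a0 [MOD q]) := by
          intro a ha
          rw [mem_filter] at ha ⊢
          refine ⟨ha.1, ?_⟩
          have e : 78 * a + 1 ≡ 78 * a0 + 1 [MOD q] :=
            ((Nat.modEq_zero_iff_dvd).mpr ha.2).trans ((Nat.modEq_zero_iff_dvd).mpr h0.2).symm
          exact Nat.ModEq.cancel_left_of_coprime hq78 (Nat.ModEq.add_right_cancel' 1 e)
        have hc := card_le_card hs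
        have hf := Nat.Ico_filter_modEq_card N (2 * N) (r := q) (by omega) a0
        have hfr : (((((Ico N (2 * N)).filter (fun a => a ≡ a0 [MOD q])).card : ℤ) : ℝ)) ≤ N / q + 1 := by
          rw [hf]
          push_cast
          have e1 := Int.ceil_lt_add_one (((2 * N : ℝ) - a0) / q)
          have e2 := Int.le_ceil (((N : ℝ) - a0) / q)
          have e3 : ((2 * N : ℝ) - a0) / q = (N - a0) / q + N / q := by ring
          have e4 : ∀ x : ℚ, ((⌈x⌉ : ℤ) : ℝ) = ((⌈(x : ℝ)⌉ : ℤ) : ℝ) := by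
            intro x; rw [Rat.ceil_cast]
          apply max_le
          · simp only [e4]
            push_cast
            linarith
          · positivity
        refine le_trans ?_ hfr
        exact_mod_cast hc
    rw [card_product]
    push_cast
    have hone : (1 : ℝ) ≤ N / q := by
      rw [le_div_iff₀ hq0]; simpa using (by exact_mod_cast hqN : (q : ℝ) ≤ N)
    calc _ ≤ ((N : ℝ) / q + 1) * (N / q) := by gcongr
      _ ≤ ((N : ℝ) / q + N / q) * (N / q) := by gcongr
      _ = _ := by field_simp; ring
  have hVc : (V.card : ℝ) ≤ (N : ℝ) ^ 2 / 2 := by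
    calc (V.card : ℝ) ≤ ((∑ q ∈ (Ioc 4 N).filter (fun q => Nat.Coprime q 78), (((Ico N (2 * N)).filter (fun a => q ∣ 78 * a + 1)) ×ˢ ((Ioc 0 N).filter (fun b => q ∣ b))).card : ℕ) : ℝ) :=
          Nat.cast_le.mpr ((card_le_card hsub).trans card_biUnion_le)
      _ ≤ ∑ q ∈ (Ioc 4 N).filter (fun q => Nat.Coprime q 78), 2 * (N : ℝ) ^ 2 * ((q : ℝ) ^ 2)⁻¹ := by
          push_cast [-card_product]
          exact sum_le_sum hterm
      _ ≤ ∑ q ∈ Ioc 4 N, 2 * (N : ℝ) ^ 2 * ((q : ℝ) ^ 2)⁻¹ :=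
          sum_le_sum_of_subset_of_nonneg (filter_subset _ _) (fun _ _ _ => by positivity)
      _ = 2 * (N : ℝ) ^ 2 * ∑ q ∈ Ioc 4 N, ((q : ℝ) ^ 2)⁻¹ := by rw [mul_sum]
      _ ≤ 2 * (N : ℝ) ^ 2 * (1 / 4) := by
          gcongr
          have := sum_Ioc_inv_sq_le_sub (α := ℝ) (k := 4) (n := N) (by norm_num) (by omega)
          have h0 : (0 : ℝ) ≤ (N : ℝ)⁻¹ := by positivity
          push_cast at this
          linarith
      _ = _ := by ring
  have : ((pairSet N).card : ℝ) + V.card = (N : ℝ) * N := by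
    have h5 : (pairSet N).card + V.card = N * N := by rw [← hUc, ← hsplit]; rfl
    exact_mod_cast h5
  nlinarith

/-- the values of the norm form -/
def pairVal (q : ℕ × ℕ) : ℤ := (78 * (q.1 : ℤ) + 1) ^ 2 - 13 * (6 * (q.2 : ℤ)) ^ 2

open Finset in
theorem energy_count (N : ℕ) (hN : 5 ≤ N) :
    (((pairSet N ×ˢ pairSet N).filter (fun q => pairVal q.1 = pairVal q.2)).card : ℝ) ≤
      (N : ℝ) ^ 2 + 2 * (2 * ((157 * N : ℕ) : ℝ) ^ 2 * (1 + Real.log ((157 * N : ℕ) : ℝ))) := by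
  classical
  have hq := quad_count (157 * N) (by omega)
  set Q := ((Icc 1 (157 * N) ×ˢ Icc 1 (157 * N)) ×ˢ (Icc 1 (157 * N) ×ˢ Icc 1 (157 * N))).filter
      (fun q : (ℕ × ℕ) × (ℕ × ℕ) => q.1.1 * q.1.2 = q.2.1 * q.2.2) with hQ
  set E := (pairSet N ×ˢ pairSet N).filter (fun q => pairVal q.1 = pairVal q.2) with hE
  have hmem : ∀ q ∈ E, (N ≤ q.1.1 ∧ q.1.1 < 2 * N ∧ 1 ≤ q.1.2 ∧ q.1.2 ≤ N) ∧
      (N ≤ q.2.1 ∧ q.2.1 < 2 * N ∧ 1 ≤ q.2.2 ∧ q.2.2 ≤ N) ∧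
      ((q.1.1 : ℤ) - q.2.1) * (39 * (q.1.1 + q.2.1) + 1) = (q.1.2 - q.2.2) * (3 * (q.1.2 + q.2.2)) := by
    intro q h
    have h := mem_filter.mp h
    have hp := mem_product.mp h.1
    have p1 := mem_product.mp (mem_filter.mp hp.1).1
    have p2 := mem_product.mp (mem_filter.mp hp.2).1
    have a1 := mem_Ico.mp p1.1
    have a2 := mem_Icc.mp p1.2
    have b1 := mem_Ico.mp p2.1
    have b2 := mem_Icc.mp p2.2
    have he := h.2
    simp only [pairVal] at he
    refine ⟨by omega, by omega, ?_⟩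
    linarith
  have hlt : ∀ a b a' b' : ℤ, 0 < b → 0 < b' → 0 < a → 0 < a' → a' < a →
      (a - a') * (39 * (a + a') + 1) = (b - b') * (3 * (b + b')) → b' < b := by
    intro a b a' b' hb hb' ha ha' h he
    by_contra hc
    push Not at hc
    have h1 : 0 < (a - a') * (39 * (a + a') + 1) := mul_pos (by omega) (by omega)
    have h2 : (b - b') * (3 * (b + b')) ≤ 0 := mul_nonpos_of_nonpos_of_nonneg (by omega) (by omega)
    omega
  have key : ((E.filter (fun q => q.2.1 < q.1.1)).card) ≤ Q.card := by
    apply card_le_card_of_injOn (fun q => ((q.1.1 - q.2.1, 39 * (q.1.1 + q.2.1) + 1),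
      (q.1.2 - q.2.2, 3 * (q.1.2 + q.2.2))))
    · rintro ⟨⟨a, b⟩, ⟨a', b'⟩⟩ h
      have h := mem_filter.mp h
      obtain ⟨h1, h2, h3⟩ := hmem _ h.1
      have h4 := h.2
      simp only at h1 h2 h3 h4
      have hb := hlt a b a' b' (by omega) (by omega) (by omega) (by omega) (by omega) h3
      simp only [hQ, coe_filter, Set.mem_setOf_eq, mem_product, mem_Icc]
      refine ⟨by omega, ?_⟩
      zify [h4.le, (by omega : b' ≤ b)]
      exact h3
    · rintro ⟨⟨a, b⟩, ⟨a', b'⟩⟩ h ⟨⟨c, d⟩, ⟨c', d'⟩⟩ h' he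
      have h := mem_filter.mp h
      obtain ⟨h1, h2, h3⟩ := hmem _ h.1
      have h4 := h.2
      have h' := mem_filter.mp h'
      obtain ⟨h1', h2', h3'⟩ := hmem _ h'.1
      have h4' := h'.2
      simp only at h1 h2 h3 h4 h1' h2' h3' h4'
      have hb := hlt a b a' b' (by omega) (by omega) (by omega) (by omega) (by omega) h3
      have hd := hlt c d c' d' (by omega) (by omega) (by omega) (by omega) (by omega) h3'
      simp only [Prod.mk.injEq] at he ⊢
      omega
  have key2 : ((E.filter (fun q => q.1.1 < q.2.1)).card) ≤ (E.filter (fun q => q.2.1 < q.1.1)).card := by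
    apply card_le_card_of_injOn Prod.swap
    · intro q h
      have h := mem_filter.mp h
      apply mem_coe.mpr
      rw [mem_filter]
      refine ⟨?_, h.2⟩
      have h1 := h.1
      simp only [hE, mem_filter, mem_product] at h1 ⊢
      exact ⟨⟨h1.1.2, h1.1.1⟩, h1.2.symm⟩
    · exact Prod.swap_injective.injOn
  have key3 : ((E.filter (fun q => q.1.1 = q.2.1)).card) ≤ N * N := by
    have : N * N = (Ico N (2 * N) ×ˢ Icc 1 N).card := by simp; left; omega
    rw [this]
    apply card_le_card_of_injOn Prod.fst
    · intro q h
      have h := mem_filter.mp h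
      obtain ⟨h1, h2, h3⟩ := hmem _ h.1
      simp only [coe_product, Set.mem_prod, coe_Ico, coe_Icc, Set.mem_Ico, Set.mem_Icc]
      omega
    · have aux : ∀ q ∈ E.filter (fun q => q.1.1 = q.2.1), q.1.2 = q.2.2 := by
        intro q h
        have h := mem_filter.mp h
        obtain ⟨h1, h2, h3⟩ := hmem _ h.1
        rw [h.2, sub_self, zero_mul, eq_comm, mul_eq_zero] at h3
        omega
      rintro q hq q' hq' he
      have a1 := aux q hq
      have a2 := aux q' hq'
      have b1 := (mem_filter.mp hq).2
      have b2 := (mem_filter.mp hq').2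
      refine Prod.ext he (Prod.ext ?_ ?_)
      · rw [← b1, ← b2, he]
      · rw [← a1, ← a2, he]
  have hcov : E ⊆ (E.filter (fun q => q.1.1 = q.2.1)) ∪ ((E.filter (fun q => q.2.1 < q.1.1)) ∪ (E.filter (fun q => q.1.1 < q.2.1))) := by
    intro q h
    simp only [mem_union, mem_filter, h, true_and]
    omega
  have htot : E.card ≤ N * N + (Q.card + Q.card) := by
    refine (card_le_card hcov).trans ((card_union_le _ _).trans ?_)
    have := card_union_le (E.filter (fun q => q.2.1 < q.1.1)) (E.filter (fun q => q.1.1 < q.2.1))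
    omega
  have htot' : (E.card : ℝ) ≤ N * N + (Q.card + Q.card) := by exact_mod_cast htot
  linarith

open Finset in
theorem image_count (N : ℕ) (hN : 5 ≤ N) :
    (((N : ℝ) ^ 2 / 2)) ^ 2 ≤ (((pairSet N).image pairVal).card : ℝ) * ((N : ℝ) ^ 2 +
      2 * (2 * ((157 * N : ℕ) : ℝ) ^ 2 * (1 + Real.log ((157 * N : ℕ) : ℝ)))) := by
  classical
  have h1 := pair_count N hN
  have h2 := energy_count N hN
  set P := pairSet N
  set I := P.image pairVal with hI
  have hc : P.card = ∑ n ∈ I, (P.filter (fun q => pairVal q = n)).card :=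
    card_eq_sum_card_image pairVal P
  have hE : ((P ×ˢ P).filter (fun q => pairVal q.1 = pairVal q.2)).card =
      ∑ n ∈ I, (P.filter (fun q => pairVal q = n)).card ^ 2 := by
    rw [card_eq_sum_card_fiberwise (f := fun q => pairVal q.1) (t := I)]
    · refine sum_congr rfl fun n hn => ?_
      rw [sq, ← card_product]
      congr 1
      ext ⟨q, q'⟩
      simp only [mem_filter, mem_product]
      constructor
      · rintro ⟨⟨⟨h, h'⟩, h3⟩, h4⟩
        exact ⟨⟨h, h4⟩, h', h3 ▸ h4⟩
      · rintro ⟨⟨h, h4⟩, h', h3⟩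
        exact ⟨⟨⟨h, h'⟩, h4.trans h3.symm⟩, h4⟩
    · intro q hq
      have := (mem_product.mp (mem_filter.mp hq).1).1
      exact mem_image_of_mem _ this
  have hCS : (P.card : ℝ) ^ 2 ≤ I.card * (((P ×ˢ P).filter (fun q => pairVal q.1 = pairVal q.2)).card : ℝ) := by
    rw [hc, hE]
    push_cast
    exact sq_sum_le_card_mul_sum_sq
  calc _ ≤ (P.card : ℝ) ^ 2 := by gcongr
    _ ≤ _ := hCS
    _ ≤ _ := by gcongr

theorem pairVal_good (N : ℕ) (q : ℕ × ℕ) (hq : q ∈ pairSet N) :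
    0 < pairVal q ∧ pairVal q ≤ (156 * (N : ℤ)) ^ 2 ∧ MK3LocallySolvable (pairVal q ^ 2) ∧
      ¬ ∃ x y z : ℤ, (x ^ 2 - 36) * (y ^ 2 - 36) * (z ^ 2 - 36) +
            468 * (x * y * z - 4330) ^ 2 = pairVal q ^ 2 := by
  obtain ⟨a, b⟩ := q
  have h := Finset.mem_filter.mp hq
  have hp := Finset.mem_product.mp h.1
  have h1 := Finset.mem_Ico.mp hp.1
  have h2 := Finset.mem_Icc.mp hp.2
  have h3 : Nat.Coprime (78 * a + 1) b := h.2
  simp only at h1 h2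
  have hco : IsCoprime (78 * (a : ℤ) + 1) (6 * (b : ℤ)) := by
    apply IsCoprime.mul_right
    · exact ⟨1, -13 * a, by ring⟩
    · have := Nat.isCoprime_iff_coprime.mpr h3
      push_cast at this
      exact this
  obtain ⟨g2, g3, g13, gq⟩ := good_of_pair (78 * (a : ℤ) + 1) (6 * (b : ℤ)) (by omega) (by omega) hco
  have e : pairVal (a, b) = (78 * (a : ℤ) + 1) ^ 2 - 13 * (6 * (b : ℤ)) ^ 2 := rfl
  rw [← e] at g2 g3 g13 gq
  refine ⟨?_, ?_, ⟨real_pt _, fun p _ => local_all _ g2 g3 g13 gq p⟩, ?_⟩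
  · rw [e]
    have : (b : ℤ) ≤ a := by omega
    have hb : (0 : ℤ) ≤ b := by omega
    nlinarith
  · rw [e]
    have : 78 * (a : ℤ) + 1 ≤ 156 * N := by omega
    have h0 : 0 ≤ 78 * (a : ℤ) + 1 := by omega
    have := pow_le_pow_left₀ h0 this 2
    nlinarith [sq_nonneg (b : ℤ)]
  · rintro ⟨x, y, z, hx⟩
    exact no_int _ g2 g13 gq x y z hx

theorem ncard_bound (N : ℕ) (M : ℝ) (hM : (156 * (N : ℝ)) ^ 4 ≤ M) :
    (((pairSet N).image pairVal).card : ℝ) ≤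
        ({k : ℤ | |(k : ℝ)| ≤ M ∧ MK3LocallySolvable k ∧
          ¬ ∃ x y z : ℤ, (x ^ 2 - 36) * (y ^ 2 - 36) * (z ^ 2 - 36) +
            468 * (x * y * z - 4330) ^ 2 = k}.ncard : ℝ) := by
  classical
  set T := {k : ℤ | |(k : ℝ)| ≤ M ∧ MK3LocallySolvable k ∧
          ¬ ∃ x y z : ℤ, (x ^ 2 - 36) * (y ^ 2 - 36) * (z ^ 2 - 36) +
            468 * (x * y * z - 4330) ^ 2 = k} with hT
  have hfin : T.Finite := by
    apply (Set.finite_Icc (-⌊M⌋) ⌊M⌋).subset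
    rintro k ⟨hk, -⟩
    rw [abs_le] at hk
    have h1 : k ≤ ⌊M⌋ := Int.le_floor.mpr hk.2
    have h2 : -k ≤ ⌊M⌋ := Int.le_floor.mpr (by push_cast; linarith)
    exact ⟨by omega, h1⟩
  have hinj : Set.InjOn (fun l : ℤ => l ^ 2) ((pairSet N).image pairVal : Finset ℤ) := by
    intro x hx y hy hxy
    obtain ⟨q, hq, rfl⟩ := Finset.mem_image.mp (Finset.mem_coe.mp hx)
    obtain ⟨q', hq', rfl⟩ := Finset.mem_image.mp (Finset.mem_coe.mp hy)
    exact (pow_left_inj₀ (pairVal_good N q hq).1.le (pairVal_good N q' hq').1.le two_ne_zero).mp hxy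
  have hsub : (((pairSet N).image pairVal).image (fun l : ℤ => l ^ 2) : Finset ℤ) ⊆ hfin.toFinset := by
    intro k hk
    obtain ⟨l, hl, rfl⟩ := Finset.mem_image.mp hk
    obtain ⟨q, hq, rfl⟩ := Finset.mem_image.mp hl
    obtain ⟨h1, h2, h3, h4⟩ := pairVal_good N q hq
    rw [Set.Finite.mem_toFinset]
    refine ⟨?_, h3, h4⟩
    have h5 : pairVal q ^ 2 ≤ ((156 * (N : ℤ)) ^ 2) ^ 2 := pow_le_pow_left₀ h1.le h2 2
    have h6 : ((pairVal q ^ 2 : ℤ) : ℝ) ≤ ((156 * (N : ℝ)) ^ 2) ^ 2 := by exact_mod_cast h5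
    have h7 : (0 : ℝ) ≤ ((pairVal q ^ 2 : ℤ) : ℝ) := by
      push_cast
      positivity
    rw [abs_of_nonneg h7]
    calc _ ≤ _ := h6
      _ = (156 * (N : ℝ)) ^ 4 := by ring
      _ ≤ M := hM
  have hc := Finset.card_le_card hsub
  rw [Finset.card_image_of_injOn hinj, ← Set.ncard_eq_toFinset_card T hfin] at hc
  exact_mod_cast hc

/-- second counting assertion of Theorem 5.4. The number of `k ∈ ℤ` with
`|k| ≤ M` for which `𝒰_k` fails the integral Hasse principle is `≫ √M / log M`. -/
theorem stmt10 :
    ∃ c M₀ : ℝ, 0 < c ∧ ∀ M : ℝ, M₀ ≤ M →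
      c * Real.sqrt M / Real.log M ≤
        ({k : ℤ | |(k : ℝ)| ≤ M ∧ MK3LocallySolvable k ∧
          ¬ ∃ x y z : ℤ, (x ^ 2 - 36) * (y ^ 2 - 36) * (z ^ 2 - 36) +
            468 * (x * y * z - 4330) ^ 2 = k}.ncard : ℝ) := by
  refine ⟨1 / 10 ^ 12, 10 ^ 16, by norm_num, fun M hM => ?_⟩
  have hM0 : (0 : ℝ) < M := lt_of_lt_of_le (by norm_num) hM
  set s := Real.sqrt M with hs
  set t := Real.sqrt s with ht
  have hs2 : s ^ 2 = M := Real.sq_sqrt hM0.le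
  have hs0 : 0 ≤ s := Real.sqrt_nonneg _
  have ht2 : t ^ 2 = s := Real.sq_sqrt hs0
  have ht0 : 0 ≤ t := Real.sqrt_nonneg _
  have ht4 : t ^ 4 = M := by rw [← hs2, ← ht2]; ring
  have htb : 10 ^ 4 ≤ t := by
    refine le_of_pow_le_pow_left₀ (n := 4) (by norm_num) ht0 ?_
    rw [ht4]
    refine le_trans (by norm_num) hM
  obtain ⟨N, hN⟩ : ∃ N : ℕ, N = ⌊t / 156⌋₊ := ⟨_, rfl⟩
  have hN1 : (N : ℝ) ≤ t / 156 := by rw [hN]; exact Nat.floor_le (by positivity)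
  have hN2 : t / 156 < N + 1 := by rw [hN]; exact Nat.lt_floor_add_one _
  have hN5 : 5 ≤ N := by
    have : (4 : ℝ) < N := by linarith
    have : 4 < N := by exact_mod_cast this
    omega
  have hN3 : t / 312 ≤ N := by linarith
  have hb := ncard_bound N M (by
    rw [← ht4]
    exact pow_le_pow_left₀ (by positivity) (by linarith) 4)
  refine le_trans ?_ hb
  have hi := image_count N hN5
  set C := (((pairSet N).image pairVal).card : ℝ) with hC
  have hC0 : 0 ≤ C := by rw [hC]; positivity
  have hNpos : (0 : ℝ) < N := by
    have : 0 < N := by omega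
    exact_mod_cast this
  have hNM : ((157 * N : ℕ) : ℝ) ≤ M := by
    push_cast
    have : t * 10 ≤ t ^ 4 := by nlinarith [pow_le_pow_left₀ (by norm_num) htb 3]
    linarith
  have hlog : Real.log ((157 * N : ℕ) : ℝ) ≤ Real.log M :=
    Real.log_le_log (by push_cast; positivity) hNM
  have hlog1 : 1 ≤ Real.log M := by
    rw [Real.le_log_iff_exp_le hM0]
    have := Real.exp_one_lt_d9
    linarith
  set L := Real.log M with hL
  have hL0 : 0 < L := by linarith
  have h1 : ((N : ℝ) ^ 2 / 2) ^ 2 ≤ C * ((N : ℝ) ^ 2 * (10 ^ 6 * L)) := by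
    refine hi.trans (mul_le_mul_of_nonneg_left ?_ hC0)
    push_cast at hlog ⊢
    have h2 : (N : ℝ) ^ 2 * (1 + 98596 * (1 + Real.log (157 * N))) ≤ (N : ℝ) ^ 2 * (10 ^ 6 * L) := by
      apply mul_le_mul_of_nonneg_left _ (by positivity)
      linarith
    linarith
  have h2 : (N : ℝ) ^ 2 / 4 ≤ C * (10 ^ 6 * L) := by
    have hp : (0 : ℝ) < (N : ℝ) ^ 2 := by positivity
    refine le_of_mul_le_mul_left ?_ hp
    linarith
  have h3 : s / 312 ^ 2 ≤ (N : ℝ) ^ 2 := by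
    rw [← ht2, ← div_pow]
    exact pow_le_pow_left₀ (by positivity) hN3 2
  rw [div_le_iff₀ hL0]
  linarith
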